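/- arXiv:1605.02691 — 2 statements merged into one kernel-verified Lean document; each statement's English description precedes it below -/
import Mathlib

section
/- An unshielded plane continuum X is locally connected (as a topological subspace of ℂ) if and only if X is finitely Suslinian. -/
/-!
Suppose that `X` is finitely Suslinian and let `B` be a closed disc centred at `x ∈ X`. By boundary
bumping, a component of `X ∩ B` which meets the concentric disc of half the radius either is all
of `X` or reaches the boundary of `B`, so its diameter is bounded below. Hence there are only
finitely many such components, they are closed, and the one containing `x` is a neighbourhood of
`x` in `X`.

Conversely, suppose that `X` is locally connected and that infinitely many disjoint subcontinua of
`X` have diameter at least `ε`. By compactness they accumulate at two distinct points of `X`, and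
disjoint connected neighbourhoods `E₁`, `E₂` of these two points both meet three of the continua,
`C₀`, `C₁`, `C₂`. Each `Cᵢ` is also accessible from the complementary domain `U` of `X`, as
`X ⊆ closure U`. With `E₁`, `E₂`, `U` in one vertex class and points `cᵢ ∈ Cᵢ` in the other, this
draws `K₃,₃` in the plane. As `Cᵢ` may be indecomposable, `cᵢ` is only required to lie in the
closure of a union of subcontinua of `Cᵢ` that avoid `E₂` (respectively `E₁`) and meet the other
set; edges reach `cᵢ` through a small disc.

That `K₃,₃` is not planar follows from the variation of logarithms. For disjoint paths `γ` from `a`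
to `b` and `η` from `c` to `d`, a continuous logarithm of `γ s - η t` on the unit square relates the
variations of `log (γ - c)` and `log (γ - d)` to those of `log (η - a)` and `log (η - b)`. Summing
over the pairs of independent edges at two vertices `v k`, `v l` and exponentiating, one gets `-1`
times a ratio of products which telescopes around the cycle `v 0`, `v 1`, `v 2`, while the sums
themselves cancel: `1 = (-1) ^ 3`.
-/

open Filter Topology Set Complex

noncomputable section

/-- The union of all unbounded connected components of `ℂ \ X`.  For a compact set `X`
this is the unique unbounded complementary component `U_X^∞` of `X`. -/
def UInf (X : Set ℂ) : Set ℂ :=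
  {z : ℂ | z ∉ X ∧ ¬ Bornology.IsBounded (connectedComponentIn Xᶜ z)}

/-- A compact plane set is unshielded if it coincides with the frontier of its unbounded
complementary component. -/
def Unshielded (X : Set ℂ) : Prop := X = frontier (UInf X)

/-- A set `X ⊆ ℂ` is finitely Suslinian if for every `ε > 0`, every collection of pairwise
disjoint subcontinua of `X` of diameter at least `ε` is finite. -/
def FinSuslinianSet (X : Set ℂ) : Prop :=
  ∀ ε : ℝ, 0 < ε → ∀ 𝒞 : Set (Set ℂ),
    (∀ C ∈ 𝒞, C ⊆ X ∧ IsCompact C ∧ IsConnected C ∧ ε ≤ Metric.diam C) →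
    𝒞.Pairwise Disjoint → 𝒞.Finite

end

/-! ### Variation of the logarithm along a path -/

section Logarithm

variable {A : Type*} [TopologicalSpace A]

lemma exists_continuous_exp_eq [SimplyConnectedSpace A] [LocallyPathConnectedSpace A] {f : A → ℂ}
    (hf : Continuous f) (hf₀ : ∀ a, f a ≠ 0) :
    ∃ L : A → ℂ, Continuous L ∧ ∀ a, exp (L a) = f a := by
  obtain ⟨a₀⟩ : Nonempty A := inferInstance
  obtain ⟨L, ⟨-, hL⟩, -⟩ :=
    isCoveringMapOn_exp.existsUnique_continuousMap_lifts ⟨f, hf⟩ (exp_log (hf₀ a₀)) hf₀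
  exact ⟨L, L.continuous, congr_fun hL⟩

lemma sub_eq_sub_of_exp_eq_exp [PreconnectedSpace A] {F G : A → ℂ} (hF : Continuous F)
    (hG : Continuous G) (h : ∀ a, exp (F a) = exp (G a)) (a b : A) : F a - F b = G a - G b := by
  have hconst : F a - G a = F b - G b :=
    isCoveringMap_exp.const_of_comp (g := fun a ↦ F a - G a) (hF.sub hG)
      (fun a b ↦ Subtype.ext <| by simp [exp_sub, h]) a b
  linear_combination hconst

end Logarithm

open Classical in
/-- The increment along a path `γ` of a continuous logarithm of `γ - v`; its imaginary part is the
angle swept by `γ` as seen from `v`. The value is `0` if `γ` passes through `v`, where no such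
logarithm exists. -/
noncomputable def logVariation {a b : ℂ} (γ : Path a b) (v : ℂ) : ℂ :=
  if h : ∃ L : ℝ → ℂ, Continuous L ∧ ∀ t, exp (L t) = γ.extend t - v then
    h.choose 1 - h.choose 0
  else 0

section LogVariation

variable {a b c d v : ℂ} {γ : Path a b}

lemma logVariation_eq {L : ℝ → ℂ} (hL : Continuous L) (h : ∀ t, exp (L t) = γ.extend t - v) :
    logVariation γ v = L 1 - L 0 := by
  have hex : ∃ L : ℝ → ℂ, Continuous L ∧ ∀ t, exp (L t) = γ.extend t - v := ⟨L, hL, h⟩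
  rw [logVariation, dif_pos hex]
  exact sub_eq_sub_of_exp_eq_exp hex.choose_spec.1 hL
    (fun t ↦ (hex.choose_spec.2 t).trans (h t).symm) 1 0

lemma extend_sub_ne_zero (hv : v ∉ range γ) (t : ℝ) : γ.extend t - v ≠ 0 :=
  sub_ne_zero.2 fun h ↦ hv <| γ.extend_range ▸ ⟨t, h⟩

lemma exp_logVariation (hv : v ∉ range γ) : exp (logVariation γ v) = (b - v) / (a - v) := by
  obtain ⟨L, hL, h⟩ := exists_continuous_exp_eq (by fun_prop) (extend_sub_ne_zero hv)
  rw [logVariation_eq hL h, exp_sub, h, h, γ.extend_zero, γ.extend_one]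

-- A continuous logarithm of `γ s - η t` has total increment zero around the unit square. Adding
-- `π * I` makes it a logarithm of `η t - γ s` without changing its increments.
lemma logVariation_sub_logVariation {γ : Path a b} {η : Path c d}
    (h : Disjoint (range γ) (range η)) :
    logVariation γ c - logVariation γ d = logVariation η a - logVariation η b := by
  have hne : ∀ x : ℝ × ℝ, γ.extend x.1 - η.extend x.2 ≠ 0 := fun x ↦
    extend_sub_ne_zero (h.notMem_of_mem_right (η.extend_range ▸ mem_range_self x.2)) x.1
  obtain ⟨L, hL, hexp⟩ := exists_continuous_exp_eq (by fun_prop) hne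
  have hγ (t : ℝ) : logVariation γ (η.extend t) = L (1, t) - L (0, t) :=
    logVariation_eq (L := fun s ↦ L (s, t)) (by fun_prop) fun s ↦ hexp (s, t)
  have hη (s : ℝ) : logVariation η (γ.extend s) = L (s, 1) - L (s, 0) := by
    rw [logVariation_eq (L := fun t ↦ L (s, t) + Real.pi * I) (by fun_prop) fun t ↦ by
      rw [exp_add, hexp, exp_pi_mul_I]; ring]
    ring
  have hγ₀ := hγ 0
  have hγ₁ := hγ 1
  have hη₀ := hη 0
  have hη₁ := hη 1
  rw [Path.extend_zero] at hγ₀ hη₀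
  rw [Path.extend_one] at hγ₁ hη₁
  linear_combination hγ₀ - hγ₁ - hη₀ + hη₁

end LogVariation

/-! ### Nonplanarity of the complete bipartite graph `K₃,₃` -/

/-- In the family `F` of edges of a complete bipartite graph with vertex classes `ι` and `κ`, drawn
as subsets `F k i` of `α`, any two edges without a common endpoint are disjoint. Edges with a
common endpoint may intersect in any way. -/
def IndependentEdgesDisjoint {ι κ α : Type*} (F : ι → κ → Set α) : Prop :=
  ∀ ⦃k l i j⦄, k ≠ l → i ≠ j → Disjoint (F k i) (F l j)

section PathDrawing

variable {ι : Type*} {v : ι → ℂ} {c : Fin 3 → ℂ} {γ : ∀ k i, Path (v k) (c i)} {k l : ι}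

lemma notMem_range_of_independentEdgesDisjoint
    (h : IndependentEdgesDisjoint fun k i ↦ range (γ k i)) (hkl : k ≠ l) (i : Fin 3) :
    v l ∉ range (γ k i) := by
  obtain ⟨j, hj⟩ := exists_ne i
  exact (h hkl hj.symm).notMem_of_mem_right (γ l j).source_mem_range

lemma two_mul_sum_logVariation_sub_sum_logVariation
    (h : IndependentEdgesDisjoint fun k i ↦ range (γ k i)) (hkl : k ≠ l) :
    2 * (∑ i, logVariation (γ k i) (v l) - ∑ i, logVariation (γ l i) (v k)) =
      ∑ i, ∑ j ∈ {i}ᶜ, logVariation (γ k i) (c j) -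
        ∑ i, ∑ j ∈ {i}ᶜ, logVariation (γ l i) (c j) := by
  have hsq (i j : Fin 3) (hij : i ≠ j) := logVariation_sub_logVariation (h hkl hij)
  have h0 : ({0}ᶜ : Finset (Fin 3)) = {1, 2} := by decide
  have h1 : ({1}ᶜ : Finset (Fin 3)) = {0, 2} := by decide
  have h2 : ({2}ᶜ : Finset (Fin 3)) = {0, 1} := by decide
  simp only [Fin.sum_univ_three, h0, h1, h2,
    Finset.sum_pair (show (0 : Fin 3) ≠ 1 by decide),
    Finset.sum_pair (show (0 : Fin 3) ≠ 2 by decide),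
    Finset.sum_pair (show (1 : Fin 3) ≠ 2 by decide)]
  linear_combination hsq 0 1 (by decide) + hsq 0 2 (by decide) +
    hsq 1 0 (by decide) + hsq 1 2 (by decide) +
    hsq 2 0 (by decide) + hsq 2 1 (by decide)

lemma exp_sum_logVariation_sub_sum_logVariation
    (h : IndependentEdgesDisjoint fun k i ↦ range (γ k i)) (hkl : k ≠ l) :
    exp (∑ i, logVariation (γ k i) (v l) - ∑ i, logVariation (γ l i) (v k)) =
      -((∏ i, (c i - v l)) / ∏ i, (c i - v k)) := by
  have hvl := notMem_range_of_independentEdgesDisjoint h hkl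
  have hvk := notMem_range_of_independentEdgesDisjoint h hkl.symm
  have hne : v k - v l ≠ 0 := sub_ne_zero.2 fun he ↦ hvl 0 (he ▸ (γ k 0).source_mem_range)
  rw [exp_sub, exp_sum, exp_sum, Finset.prod_congr rfl fun i _ ↦ exp_logVariation (hvl i),
    Finset.prod_congr rfl fun i _ ↦ exp_logVariation (hvk i), Finset.prod_div_distrib,
    Finset.prod_div_distrib, Finset.prod_const, Finset.prod_const, ← neg_sub (v k) (v l),
    Finset.card_univ, Fintype.card_fin, Odd.neg_pow (by decide), div_neg, div_neg,
    div_div_div_cancel_right₀ (pow_ne_zero 3 hne)]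

end PathDrawing

lemma not_independentEdgesDisjoint_range_path {v c : Fin 3 → ℂ} (γ : ∀ k i, Path (v k) (c i)) :
    ¬ IndependentEdgesDisjoint fun k i ↦ range (γ k i) := by
  intro h
  have h₀₁ : (0 : Fin 3) ≠ 1 := by decide
  have h₁₂ : (1 : Fin 3) ≠ 2 := by decide
  have h₂₀ : (2 : Fin 3) ≠ 0 := by decide
  have hne {k l : Fin 3} (hkl : k ≠ l) : ∏ i, (c i - v k) ≠ 0 :=
    Finset.prod_ne_zero_iff.2 fun i _ ↦ sub_ne_zero.2 fun he ↦
      notMem_range_of_independentEdgesDisjoint h hkl.symm i (he ▸ (γ l i).target_mem_range)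
  let D (k l : Fin 3) := ∑ i, logVariation (γ k i) (v l) - ∑ i, logVariation (γ l i) (v k)
  have hexp {k l : Fin 3} (hkl : k ≠ l) : exp (D k l) = _ :=
    exp_sum_logVariation_sub_sum_logVariation h hkl
  have hcycle : D 0 1 + D 1 2 + D 2 0 = 0 := by
    have hD {k l : Fin 3} (hkl : k ≠ l) : 2 * D k l = _ :=
      two_mul_sum_logVariation_sub_sum_logVariation h hkl
    linear_combination (hD h₀₁ + hD h₁₂ + hD h₂₀) / 2
  have hone : exp (D 0 1 + D 1 2 + D 2 0) = -1 := by
    have h₀ := hne h₀₁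
    have h₁ := hne h₁₂
    have h₂ := hne h₂₀
    rw [exp_add, exp_add, hexp h₀₁, hexp h₁₂, hexp h₂₀]
    field_simp
  norm_num [hcycle] at hone

/-- A set is a continuum if it is nonempty, compact and connected. -/
structure IsContinuum {α : Type*} [TopologicalSpace α] (C : Set α) : Prop where
  isCompact : IsCompact C
  isConnected : IsConnected C

namespace IsContinuum

variable {α : Type*} [TopologicalSpace α] {C D : Set α}

lemma isPreconnected (hC : IsContinuum C) : IsPreconnected C :=
  hC.isConnected.isPreconnected

lemma nonempty (hC : IsContinuum C) : C.Nonempty :=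
  hC.isConnected.nonempty

lemma union (hC : IsContinuum C) (hD : IsContinuum D) (h : (C ∩ D).Nonempty) :
    IsContinuum (C ∪ D) :=
  ⟨hC.isCompact.union hD.isCompact, hC.isConnected.union h hD.isConnected⟩

end IsContinuum

lemma isContinuum_closedBall {E : Type*} [NormedAddCommGroup E] [NormedSpace ℝ E] [ProperSpace E]
    (x : E) {r : ℝ} (hr : 0 ≤ r) : IsContinuum (Metric.closedBall x r) :=
  ⟨isCompact_closedBall x r, Metric.isConnected_closedBall hr⟩

lemma isPreconnected_thickening {E : Type*} [NormedAddCommGroup E] [NormedSpace ℝ E] {s : Set E}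
    (hs : IsPreconnected s) (δ : ℝ) : IsPreconnected (Metric.thickening δ s) := by
  rw [← add_ball_zero, ← add_image_prod]
  exact (hs.prod Metric.isPreconnected_ball).image _ (by fun_prop)

lemma exists_pos_forall_disjoint_thickening {ι α : Type*} [Finite ι] [EMetricSpace α]
    {A : ι → Set α} (hA : ∀ i, IsCompact (A i)) :
    ∃ δ > 0, ∀ i j, Disjoint (A i) (A j) →
      Disjoint (Metric.thickening δ (A i)) (Metric.thickening δ (A j)) := by
  have hpair (i j : ι) : ∀ᶠ δ in 𝓝[>] (0 : ℝ), Disjoint (A i) (A j) →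
      Disjoint (Metric.thickening δ (A i)) (Metric.thickening δ (A j)) := by
    by_cases hij : Disjoint (A i) (A j)
    · obtain ⟨δ, hδ, hdisj⟩ := hij.exists_thickenings (hA i) (hA j).isClosed
      filter_upwards [Ioo_mem_nhdsGT hδ] with r hr _
      exact hdisj.mono (Metric.thickening_mono hr.2.le _) (Metric.thickening_mono hr.2.le _)
    · exact .of_forall fun _ h ↦ (hij h).elim
  obtain ⟨δ, hδ, hpos⟩ :=
    ((eventually_all.2 fun i ↦ eventually_all.2 (hpair i)).and self_mem_nhdsWithin).exists
  exact ⟨δ, hpos, hδ⟩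

lemma IndependentEdgesDisjoint.mono {ι κ α : Type*} {F G : ι → κ → Set α}
    (h : IndependentEdgesDisjoint G) (hFG : ∀ k i, F k i ⊆ G k i) : IndependentEdgesDisjoint F :=
  fun _ _ _ _ hkl hij ↦ (h hkl hij).mono (hFG _ _) (hFG _ _)

lemma not_independentEdgesDisjoint_of_isOpen {v c : Fin 3 → ℂ} {F : Fin 3 → Fin 3 → Set ℂ}
    (hF : ∀ k i, IsOpen (F k i)) (hF' : ∀ k i, IsPreconnected (F k i))
    (hv : ∀ k i, v k ∈ F k i) (hc : ∀ k i, c i ∈ F k i) : ¬ IndependentEdgesDisjoint F := by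
  have hjoined (k i : Fin 3) : JoinedIn (F k i) (v k) (c i) :=
    ((hF k i).isConnected_iff_isPathConnected.1 ⟨⟨_, hv k i⟩, hF' k i⟩).joinedIn
      _ (hv k i) _ (hc k i)
  exact fun h ↦ not_independentEdgesDisjoint_range_path (fun k i ↦ (hjoined k i).somePath)
    (h.mono fun k i ↦ range_subset_iff.2 (hjoined k i).somePath_mem)

lemma not_independentEdgesDisjoint_of_isContinuum {v c : Fin 3 → ℂ} {F : Fin 3 → Fin 3 → Set ℂ}
    (hF : ∀ k i, IsContinuum (F k i)) (hv : ∀ k i, v k ∈ F k i) (hc : ∀ k i, c i ∈ F k i) :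
    ¬ IndependentEdgesDisjoint F := by
  obtain ⟨δ, hδ, hdisj⟩ := exists_pos_forall_disjoint_thickening
    (A := fun e : Fin 3 × Fin 3 ↦ F e.1 e.2) fun e ↦ (hF e.1 e.2).isCompact
  have hsub (k i : Fin 3) : F k i ⊆ Metric.thickening δ (F k i) :=
    Metric.self_subset_thickening hδ _
  exact fun h ↦ not_independentEdgesDisjoint_of_isOpen (fun _ _ ↦ Metric.isOpen_thickening)
    (fun k i ↦ isPreconnected_thickening (hF k i).isPreconnected δ)
    (fun k i ↦ hsub k i (hv k i)) (fun k i ↦ hsub k i (hc k i))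
    fun k l i j hkl hij ↦ hdisj (k, i) (l, j) (h hkl hij)

/-! ### Boundary bumping -/

section BoundaryBumping

variable {α : Type*} [TopologicalSpace α] {K P U X : Set α} {x : α}

lemma isClosed_connectedComponentIn (hK : IsClosed K) (x : α) :
    IsClosed (connectedComponentIn K x) := by
  by_cases hx : x ∈ K
  · exact isClosed_of_closure_subset <|
      isPreconnected_connectedComponentIn.closure.subset_connectedComponentIn
        (subset_closure (mem_connectedComponentIn hx))
        (closure_minimal (connectedComponentIn_subset K x) hK)
  · simp [connectedComponentIn_eq_empty hx]

variable [T2Space α]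

lemma isContinuum_connectedComponentIn (hP : IsCompact P) (hx : x ∈ P) :
    IsContinuum (connectedComponentIn P x) :=
  ⟨hP.of_isClosed_subset (isClosed_connectedComponentIn hP.isClosed x)
    (connectedComponentIn_subset P x), isConnected_connectedComponentIn_iff.2 hx⟩

lemma exists_isClopen_subset_of_connectedComponent_subset [CompactSpace α] (hU : IsOpen U)
    (h : connectedComponent x ⊆ U) : ∃ Z, IsClopen Z ∧ x ∈ Z ∧ Z ⊆ U := by
  let ι := {Z : Set α // IsClopen Z ∧ x ∈ Z}
  have : Nonempty ι := ⟨⟨univ, isClopen_univ, mem_univ x⟩⟩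
  have hdir : Directed (· ⊇ ·) fun Z : ι ↦ (Z : Set α) := fun A B ↦
    ⟨⟨A.1 ∩ B.1, A.2.1.inter B.2.1, A.2.2, B.2.2⟩, inter_subset_left, inter_subset_right⟩
  obtain ⟨⟨Z, hZ, hxZ⟩, hZU⟩ := exists_subset_nhds_of_isCompact' hdir
    (fun Z ↦ Z.2.1.isClosed.isCompact) (fun Z ↦ Z.2.1.isClosed) fun y hy ↦
      hU.mem_nhds (h (by rwa [connectedComponent_eq_iInter_isClopen]))
  exact ⟨Z, hZ, hxZ, hZU⟩

lemma exists_isClosed_union_eq_of_connectedComponentIn_subset (hP : IsCompact P) (hx : x ∈ P)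
    (hU : IsOpen U) (h : connectedComponentIn P x ⊆ U) :
    ∃ Z W, IsClosed Z ∧ IsClosed W ∧ Disjoint Z W ∧ Z ∪ W = P ∧ x ∈ Z ∧ Z ⊆ U := by
  have : CompactSpace P := isCompact_iff_compactSpace.1 hP
  rw [connectedComponentIn_eq_image hx, image_subset_iff] at h
  obtain ⟨Z, hZ, hxZ, hZU⟩ := exists_isClopen_subset_of_connectedComponent_subset
    (hU.preimage continuous_subtype_val) h
  have hemb := hP.isClosed.isClosedEmbedding_subtypeVal
  refine ⟨Subtype.val '' Z, Subtype.val '' Zᶜ, hemb.isClosedMap Z hZ.isClosed,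
    hemb.isClosedMap _ hZ.compl.isClosed, ?_, ?_, ⟨_, hxZ, rfl⟩, image_subset_iff.2 hZU⟩
  · exact (disjoint_image_iff Subtype.val_injective).2 disjoint_compl_right
  · rw [← image_union, union_compl_self, image_univ, Subtype.range_coe]

lemma connectedComponentIn_inter_closure_sdiff_nonempty (hX : IsContinuum X) (hK : IsClosed K)
    (hx : x ∈ X ∩ K) (hXK : ¬ X ⊆ K) :
    (connectedComponentIn (X ∩ K) x ∩ closure (X \ K)).Nonempty := by
  by_contra hempty
  rw [not_nonempty_iff_eq_empty, ← disjoint_iff_inter_eq_empty] at hempty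
  obtain ⟨Z, W, hZ, hW, hZW, hunion, hxZ, hZU⟩ :=
    exists_isClosed_union_eq_of_connectedComponentIn_subset (hX.isCompact.inter_right hK) hx
      isClosed_closure.isOpen_compl hempty.subset_compl_right
  have hcover : X ⊆ Z ∪ (W ∪ closure (X \ K)) := by
    rw [← union_assoc, hunion]
    exact fun y hy ↦ (em (y ∈ K)).imp (⟨hy, ·⟩) fun hyK ↦ subset_closure ⟨hy, hyK⟩
  obtain ⟨y, hyX, hyK⟩ := not_subset.1 hXK
  obtain ⟨z, -, hzZ, hzW | hz⟩ := isPreconnected_closed_iff.1 hX.isPreconnected Z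
    (W ∪ closure (X \ K)) hZ (hW.union isClosed_closure) hcover ⟨x, hx.1, hxZ⟩
    ⟨y, hyX, .inr (subset_closure ⟨hyX, hyK⟩)⟩
  · exact hZW.notMem_of_mem_left hzZ hzW
  · exact hZU hzZ hz

end BoundaryBumping

/-- The continuum component (or constituant) of `x` in `S`: the union of all continua contained in
`S` and containing `x`. Unlike in `connectedComponentIn S x`, any point can be joined to `x` by a
compact connected subset of `S`. -/
def continuumComponentIn {α : Type*} [TopologicalSpace α] (S : Set α) (x : α) : Set α :=
  ⋃₀ {R | IsContinuum R ∧ R ⊆ S ∧ x ∈ R}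

section ContinuumComponent

variable {α : Type*} [TopologicalSpace α] {C E E₁ E₂ S T : Set α} {x y : α}

lemma continuumComponentIn_subset (S : Set α) (x : α) : continuumComponentIn S x ⊆ S :=
  sUnion_subset fun _ hR ↦ hR.2.1

lemma continuumComponentIn_mono (h : S ⊆ T) (x : α) :
    continuumComponentIn S x ⊆ continuumComponentIn T x :=
  sUnion_subset_sUnion fun _ hR ↦ ⟨hR.1, hR.2.1.trans h, hR.2.2⟩

lemma mem_continuumComponentIn (hx : x ∈ S) : x ∈ continuumComponentIn S x :=
  ⟨{x}, ⟨⟨isCompact_singleton, isConnected_singleton⟩, singleton_subset_iff.2 hx, rfl⟩, rfl⟩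

lemma isConnected_continuumComponentIn (hx : x ∈ S) : IsConnected (continuumComponentIn S x) :=
  ⟨⟨x, mem_continuumComponentIn hx⟩,
    isPreconnected_sUnion x _ (fun _ hR ↦ hR.2.2) fun _ hR ↦ hR.1.isPreconnected⟩

lemma closure_continuumComponentIn_subset (hC : IsClosed C) (hS : S ⊆ C) (x : α) :
    closure (continuumComponentIn S x) ⊆ C :=
  closure_minimal ((continuumComponentIn_subset S x).trans hS) hC

variable [T2Space α]

lemma isContinuum_closure_continuumComponentIn (hC : IsCompact C) (hS : S ⊆ C) (hx : x ∈ S) :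
    IsContinuum (closure (continuumComponentIn S x)) :=
  ⟨hC.of_isClosed_subset isClosed_closure (closure_continuumComponentIn_subset hC.isClosed hS x),
    (isConnected_continuumComponentIn hx).closure⟩

lemma closure_continuumComponentIn_sdiff_inter_nonempty (hC : IsContinuum C) (hE : IsClosed E)
    (hx : x ∈ C \ E) (hCE : (C ∩ E).Nonempty) :
    (closure (continuumComponentIn (C \ E) x) ∩ E).Nonempty := by
  have hsub : closure (continuumComponentIn (C \ E) x) ⊆ C :=
    closure_continuumComponentIn_subset hC.isCompact.isClosed sdiff_subset x
  by_contra hempty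
  rw [not_nonempty_iff_eq_empty, ← disjoint_iff_inter_eq_empty] at hempty
  obtain ⟨U, V, hU, hV, hWU, hEV, hUV⟩ := SeparatedNhds.of_isCompact_isCompact
    (hC.isCompact.of_isClosed_subset isClosed_closure hsub) (hC.isCompact.inter_right hE)
    (hempty.mono_right inter_subset_right)
  have hxU : x ∈ U := hWU (subset_closure (mem_continuumComponentIn hx))
  have hxV : x ∈ C ∩ Vᶜ := ⟨hx.1, hUV.notMem_of_mem_left hxU⟩
  have hcompE : connectedComponentIn (C ∩ Vᶜ) x ⊆ C \ E := fun z hz ↦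
    have hz' := connectedComponentIn_subset _ x hz
    ⟨hz'.1, fun hzE ↦ hz'.2 (hEV ⟨hz'.1, hzE⟩)⟩
  have hcomp : IsContinuum (connectedComponentIn (C ∩ Vᶜ) x) :=
    isContinuum_connectedComponentIn (hC.isCompact.inter_right hV.isClosed_compl) hxV
  have hcompU : connectedComponentIn (C ∩ Vᶜ) x ⊆ U := fun z hz ↦
    hWU (subset_closure ⟨_, ⟨hcomp, hcompE, mem_connectedComponentIn hxV⟩, hz⟩)
  obtain ⟨y, hyC, hyE⟩ := hCE
  obtain ⟨z, hz, hzV⟩ := connectedComponentIn_inter_closure_sdiff_nonempty hC hV.isClosed_compl hxV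
    fun h ↦ h hyC (hEV ⟨hyC, hyE⟩)
  rw [sdiff_compl] at hzV
  exact (hUV.closure_right hU).notMem_of_mem_left (hcompU hz)
    (closure_mono inter_subset_right hzV)

-- Apply the previous lemma twice: inside `C` starting from `E₁`, then inside the resulting
-- continuum starting from `E₂`.
lemma exists_mem_closure_continuumComponentIn_sdiff (hC : IsContinuum C) (hE₁ : IsClosed E₁)
    (hE₂ : IsClosed E₂) (hE : Disjoint E₁ E₂) (hx : x ∈ C ∩ E₁) (h₂ : (C ∩ E₂).Nonempty) :
    ∃ y ∈ C ∩ E₂, ∃ c ∈ C, c ∉ E₁ ∧ c ∉ E₂ ∧ c ∈ closure (continuumComponentIn (C \ E₂) x) ∧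
      c ∈ closure (continuumComponentIn (C \ E₁) y) := by
  have hx' : x ∈ C \ E₂ := ⟨hx.1, hE.notMem_of_mem_left hx.2⟩
  let W := closure (continuumComponentIn (C \ E₂) x)
  have hW : IsContinuum W :=
    isContinuum_closure_continuumComponentIn hC.isCompact sdiff_subset hx'
  have hWC : W ⊆ C :=
    closure_continuumComponentIn_subset hC.isCompact.isClosed sdiff_subset x
  obtain ⟨y, hyW, hy₂⟩ := closure_continuumComponentIn_sdiff_inter_nonempty hC hE₂ hx' h₂
  have hy' : y ∈ W \ E₁ := ⟨hyW, hE.notMem_of_mem_right hy₂⟩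
  let V := closure (continuumComponentIn (W \ E₁) y)
  have hyV : y ∈ V := subset_closure (mem_continuumComponentIn hy')
  have hVW : V ⊆ W :=
    closure_continuumComponentIn_subset isClosed_closure sdiff_subset y
  obtain ⟨c, hcV, hc⟩ : ∃ c ∈ V, c ∉ E₁ ∪ E₂ := by
    by_contra! hcover
    obtain ⟨z, -, hz₁, hz₂⟩ := isPreconnected_closed_iff.1
      (isConnected_continuumComponentIn hy').closure.isPreconnected E₁ E₂ hE₁ hE₂ hcover
      (closure_continuumComponentIn_sdiff_inter_nonempty hW hE₁ hy'
        ⟨x, subset_closure (mem_continuumComponentIn hx'), hx.2⟩) ⟨y, hyV, hy₂⟩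
    exact hE.notMem_of_mem_left hz₁ hz₂
  rw [mem_union, not_or] at hc
  exact ⟨y, ⟨hWC hyW, hy₂⟩, c, hWC (hVW hcV), hc.1, hc.2, hVW hcV,
    closure_mono (continuumComponentIn_mono (sdiff_subset_sdiff_left hWC) y) hcV⟩

end ContinuumComponent

/-! ### Three disjoint continua joining two continua -/

section Bridges

open Metric
open scoped Function

lemma exists_isContinuum_subset_union_of_mem_closure {α : Type*} [TopologicalSpace α]
    {D E S : Set α} {x c : α} (hE : IsContinuum E) (hx : x ∈ E) (hD : IsContinuum D)
    (hDc : D ∈ 𝓝 c) (hc : c ∈ closure (continuumComponentIn S x)) :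
    ∃ F, IsContinuum F ∧ E ⊆ F ∧ c ∈ F ∧ F ⊆ E ∪ (S ∪ D) := by
  obtain ⟨z, hzD, R, ⟨hR, hRS, hxR⟩, hzR⟩ := mem_closure_iff_nhds.1 hc D hDc
  exact ⟨E ∪ (R ∪ D), hE.union (hR.union hD ⟨z, hzR, hzD⟩) ⟨x, hx, .inl hxR⟩,
    subset_union_left, .inr (.inr (mem_of_mem_nhds hDc)), by gcongr⟩

lemma exists_isContinuum_subset_forall_inter_nonempty {α : Type*} [TopologicalSpace α] {n : ℕ}
    {U : Set α} {D : Fin (n + 1) → Set α} (hU : IsPathConnected U)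
    (hD : ∀ i, (U ∩ D i).Nonempty) : ∃ T ⊆ U, IsContinuum T ∧ ∀ i, (T ∩ D i).Nonempty := by
  choose p hpU hpD using hD
  obtain ⟨γ, hγU, hγp⟩ := hU.exists_path_through_family p hpU
  exact ⟨range γ, hγU, ⟨isCompact_range γ.continuous, isConnected_range γ.continuous⟩,
    fun i ↦ ⟨p i, hγp i, hpD i⟩⟩

lemma exists_pos_forall_closedBall_subset {ι α : Type*} [Finite ι] [PseudoMetricSpace α]
    {c : ι → α} {N : ι → Set α} (hN : ∀ i, N i ∈ 𝓝 (c i)) :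
    ∃ ρ > 0, ∀ i, closedBall (c i) ρ ⊆ N i := by
  have hsub : ∀ᶠ ρ in 𝓝[>] (0 : ℝ), ∀ i, closedBall (c i) ρ ⊆ N i :=
    (eventually_all.2 fun i ↦ eventually_closedBall_subset (hN i)).filter_mono
      nhdsWithin_le_nhds
  obtain ⟨ρ, hρ, hpos⟩ := (hsub.and self_mem_nhdsWithin).exists
  exact ⟨ρ, hpos, hρ⟩

lemma independentEdgesDisjoint_union {ι κ α : Type*} {V : ι → Set α} {G : ι → κ → Set α}
    {Q : κ → Set α} (hV : Pairwise (Disjoint on V)) (hQ : Pairwise (Disjoint on Q))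
    (hVG : ∀ k l i, k ≠ l → Disjoint (V k) (G l i)) (hGQ : ∀ k i, G k i ⊆ Q i) :
    IndependentEdgesDisjoint fun k i ↦ V k ∪ G k i := fun k l i j hkl hij ↦
  ((hV hkl).union_right (hVG k l j hkl)).union_left
    ((hVG l k i hkl.symm).symm.union_right ((hQ hij).mono (hGQ k i) (hGQ l j)))

lemma not_forall_exists_isContinuum_subset_union {V Q : Fin 3 → Set ℂ}
    {G : Fin 3 → Fin 3 → Set ℂ} {c : Fin 3 → ℂ} (hVne : ∀ k, (V k).Nonempty)
    (hV : Pairwise (Disjoint on V)) (hQ : Pairwise (Disjoint on Q))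
    (hVG : ∀ k l i, k ≠ l → Disjoint (V k) (G l i)) (hGQ : ∀ k i, G k i ⊆ Q i) :
    ¬ ∀ k i, ∃ F, IsContinuum F ∧ V k ⊆ F ∧ c i ∈ F ∧ F ⊆ V k ∪ G k i := by
  intro h
  choose v hv using hVne
  choose F hF hVF hcF hFG using h
  exact not_independentEdgesDisjoint_of_isContinuum hF (fun k i ↦ hVF k i (hv k)) hcF
    ((independentEdgesDisjoint_union hV hQ hVG hGQ).mono hFG)

-- Otherwise `E₁`, `E₂` and `T` are joined to each of the three points `c i` by edges which draw
-- `K₃,₃`; the edges from `E₁` and `E₂` end with a jump across a disc of radius `σ` around `c i`.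
lemma exists_disjoint_closedBall {E₁ E₂ T : Set ℂ} {C Q : Fin 3 → Set ℂ} {c x y : Fin 3 → ℂ} {ρ : ℝ}
    (hE₁ : IsContinuum E₁) (hE₂ : IsContinuum E₂) (hT : IsContinuum T) (hE : Disjoint E₁ E₂)
    (hE₁T : Disjoint E₁ T) (hE₂T : Disjoint E₂ T) (hTC : ∀ i, Disjoint T (C i))
    (hQ : Pairwise (Disjoint on Q)) (hCQ : ∀ i, C i ⊆ Q i) (hρ : 0 < ρ)
    (hD : ∀ i, closedBall (c i) ρ ⊆ Q i \ (E₁ ∪ E₂)) (hc : ∀ i, c i ∈ C i)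
    (hx : ∀ i, x i ∈ E₁) (hcx : ∀ i, c i ∈ closure (continuumComponentIn (C i \ E₂) (x i)))
    (hy : ∀ i, y i ∈ E₂) (hcy : ∀ i, c i ∈ closure (continuumComponentIn (C i \ E₁) (y i))) :
    ∃ i, Disjoint T (closedBall (c i) ρ) := by
  by_contra! hTD
  obtain ⟨σ, hσ, hσD⟩ := exists_pos_forall_closedBall_subset
    (N := fun i ↦ closedBall (c i) ρ \ T) fun i ↦ sdiff_mem (closedBall_mem_nhds (c i) hρ) <|
      hT.isCompact.isClosed.isOpen_compl.mem_nhds ((hTC i).notMem_of_mem_right (hc i))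
  let V : Fin 3 → Set ℂ := ![E₁, E₂, T]
  let G : Fin 3 → Fin 3 → Set ℂ := ![fun i ↦ C i \ E₂ ∪ closedBall (c i) σ,
    fun i ↦ C i \ E₁ ∪ closedBall (c i) σ, fun i ↦ closedBall (c i) ρ]
  have hDE (i : Fin 3) := disjoint_union_left.1 (disjoint_sdiff_right.mono_right (hD i))
  have hDQ (i : Fin 3) : closedBall (c i) ρ ⊆ Q i := (hD i).trans sdiff_subset
  have hσρ (i : Fin 3) : closedBall (c i) σ ⊆ closedBall (c i) ρ := (hσD i).trans sdiff_subset
  have hTσ (i : Fin 3) : Disjoint T (closedBall (c i) σ) := disjoint_sdiff_right.mono_right (hσD i)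
  have hVne : ∀ k, (V k).Nonempty
    | 0 => hE₁.nonempty
    | 1 => hE₂.nonempty
    | 2 => hT.nonempty
  have hV : Pairwise (Disjoint on V) := by
    simp [V, Pairwise, Fin.forall_fin_succ, Function.onFun, hE, hE₁T, hE₂T, disjoint_comm]
  have hVG : ∀ k l i, k ≠ l → Disjoint (V k) (G l i)
    | 0, 1, i, _ => disjoint_sdiff_right.union_right ((hDE i).1.mono_right (hσρ i))
    | 0, 2, i, _ => (hDE i).1
    | 1, 0, i, _ => disjoint_sdiff_right.union_right ((hDE i).2.mono_right (hσρ i))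
    | 1, 2, i, _ => (hDE i).2
    | 2, 0, i, _ | 2, 1, i, _ => ((hTC i).mono_right sdiff_subset).union_right (hTσ i)
    | 0, 0, _, h | 1, 1, _, h | 2, 2, _, h => (h rfl).elim
  have hGQ : ∀ k i, G k i ⊆ Q i
    | 0, i | 1, i => union_subset (sdiff_subset.trans (hCQ i)) ((hσρ i).trans (hDQ i))
    | 2, i => hDQ i
  have hedge : ∀ k i, ∃ F, IsContinuum F ∧ V k ⊆ F ∧ c i ∈ F ∧ F ⊆ V k ∪ G k i
    | 0, i => exists_isContinuum_subset_union_of_mem_closure hE₁ (hx i)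
        (isContinuum_closedBall (c i) hσ.le) (closedBall_mem_nhds (c i) hσ) (hcx i)
    | 1, i => exists_isContinuum_subset_union_of_mem_closure hE₂ (hy i)
        (isContinuum_closedBall (c i) hσ.le) (closedBall_mem_nhds (c i) hσ) (hcy i)
    | 2, i => ⟨T ∪ closedBall (c i) ρ, hT.union (isContinuum_closedBall (c i) hρ.le)
        (not_disjoint_iff_nonempty_inter.1 (hTD i)), subset_union_left,
        .inr (mem_closedBall_self hρ.le), Subset.rfl⟩
  exact not_forall_exists_isContinuum_subset_union hVne hV hQ hVG hGQ hedge

lemma exists_not_subset_closure {U E₁ E₂ : Set ℂ} {C : Fin 3 → Set ℂ} (hU : IsPathConnected U)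
    (hE₁ : IsContinuum E₁) (hE₂ : IsContinuum E₂) (hC : ∀ i, IsContinuum (C i))
    (hUE₁ : Disjoint U E₁) (hUE₂ : Disjoint U E₂) (hUC : ∀ i, Disjoint U (C i))
    (hE : Disjoint E₁ E₂) (hCC : Pairwise (Disjoint on C))
    (hC₁ : ∀ i, (C i ∩ E₁).Nonempty) (hC₂ : ∀ i, (C i ∩ E₂).Nonempty) :
    ∃ i, ¬ C i ⊆ closure U := by
  by_contra! hCU
  choose x hx using hC₁
  choose y hy c hcC hc₁ hc₂ hcx hcy using fun i ↦ exists_mem_closure_continuumComponentIn_sdiff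
    (hC i) hE₁.isCompact.isClosed hE₂.isCompact.isClosed hE (hx i) (hC₂ i)
  obtain ⟨δ, hδ, hthick⟩ := exists_pos_forall_disjoint_thickening fun i ↦ (hC i).isCompact
  have hCQ (i : Fin 3) : C i ⊆ thickening δ (C i) := self_subset_thickening hδ _
  obtain ⟨ρ, hρ, hD⟩ := exists_pos_forall_closedBall_subset
    (N := fun i ↦ thickening δ (C i) \ (E₁ ∪ E₂)) fun i ↦
      (isOpen_thickening.sdiff (hE₁.isCompact.union hE₂.isCompact).isClosed).mem_nhds
        ⟨hCQ i (hcC i), by simp [hc₁ i, hc₂ i]⟩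
  obtain ⟨T, hTU, hT, hTD⟩ := exists_isContinuum_subset_forall_inter_nonempty hU
    (D := fun i ↦ closedBall (c i) ρ) fun i ↦ (inter_comm _ _).symm ▸
      mem_closure_iff_nhds.1 (hCU i (hcC i)) _ (closedBall_mem_nhds (c i) hρ)
  obtain ⟨i, hi⟩ := exists_disjoint_closedBall hE₁ hE₂ hT hE (hUE₁.mono_left hTU).symm
    (hUE₂.mono_left hTU).symm (fun i ↦ (hUC i).mono_left hTU)
    (fun i j hij ↦ hthick i j (hCC hij)) hCQ hρ hD hcC (fun i ↦ (hx i).2) hcx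
    (fun i ↦ (hy i).2) hcy
  exact (hTD i).ne_empty hi.inter_eq

end Bridges

/-! ### The unbounded complementary component -/

section UnboundedComponent

open Metric

lemma isPreconnected_compl_closedBall {E : Type*} [NormedAddCommGroup E] [NormedSpace ℝ E]
    (h : 1 < Module.rank ℝ E) (x : E) (r : ℝ) : IsPreconnected (closedBall x r)ᶜ := by
  obtain hr | hr := lt_or_ge r 0
  · simpa [closedBall_eq_empty.2 hr] using isPreconnected_univ
  have himage : (closedBall x r)ᶜ = (fun p : ℝ × E ↦ x + p.1 • p.2) '' Ioi r ×ˢ sphere 0 1 := by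
    ext y
    simp only [mem_compl_iff, mem_closedBall, not_le, dist_eq_norm, mem_image, mem_prod, mem_Ioi,
      mem_sphere, sub_zero, Prod.exists]
    constructor
    · refine fun hy ↦ ⟨‖y - x‖, ‖y - x‖⁻¹ • (y - x), ⟨hy, ?_⟩, ?_⟩
      · exact norm_smul_inv_norm (𝕜 := ℝ) (norm_pos_iff.1 (hr.trans_lt hy))
      · rw [smul_inv_smul₀ (hr.trans_lt hy).ne', add_sub_cancel]
    · rintro ⟨t, s, ⟨ht, hs⟩, rfl⟩
      rwa [add_sub_cancel_left, norm_smul, hs, mul_one, Real.norm_of_nonneg (hr.trans ht.le)]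
  rw [himage]
  exact (isPreconnected_Ioi.prod (isPreconnected_sphere h 0 1)).image _ (by fun_prop)

variable {X : Set ℂ} {c z₀ : ℂ} {r : ℝ}

lemma UInf_eq_connectedComponentIn (hX : X ⊆ closedBall c r) (hz₀ : z₀ ∉ closedBall c r) :
    UInf X = connectedComponentIn Xᶜ z₀ := by
  have hout : (closedBall c r)ᶜ ⊆ connectedComponentIn Xᶜ z₀ :=
    (isPreconnected_compl_closedBall (by simp) c r).subset_connectedComponentIn hz₀
      (compl_subset_compl.2 hX)
  ext z
  constructor
  · rintro ⟨hzX, hunbounded⟩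
    obtain ⟨w, hwz, hw⟩ := not_subset.1 (mt isBounded_closedBall.subset hunbounded)
    rw [connectedComponentIn_eq (hout hw), ← connectedComponentIn_eq hwz]
    exact mem_connectedComponentIn hzX
  · refine fun hz ↦ ⟨connectedComponentIn_subset _ _ hz, fun hbounded ↦ ?_⟩
    rw [← connectedComponentIn_eq hz] at hbounded
    refine NormedSpace.unbounded_univ ℝ ℂ ?_
    rw [← union_compl_self (closedBall c r)]
    exact isBounded_closedBall.union (hbounded.subset hout)

lemma isPathConnected_UInf (hX : IsCompact X) : IsPathConnected (UInf X) := by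
  obtain ⟨r, hr⟩ := hX.isBounded.subset_closedBall 0
  obtain ⟨z₀, hz₀⟩ : ∃ z₀, z₀ ∉ closedBall (0 : ℂ) r := by
    by_contra! h
    exact NormedSpace.unbounded_univ ℝ ℂ (isBounded_closedBall.subset fun z _ ↦ h z)
  rw [UInf_eq_connectedComponentIn hr hz₀,
    ← hX.isClosed.isOpen_compl.connectedComponentIn.isConnected_iff_isPathConnected]
  exact isConnected_connectedComponentIn_iff.2 fun hz₀X ↦ hz₀ (hr hz₀X)

end UnboundedComponent

/-! ### The two implications -/

section FinSuslinian

open Metric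

lemma locallyConnectedSpace_coe_iff {α : Type*} [TopologicalSpace α] {X : Set α} :
    LocallyConnectedSpace X ↔
      ∀ x ∈ X, ∀ U ∈ 𝓝 x, ∃ N ∈ 𝓝[X] x, IsPreconnected N ∧ N ⊆ X ∩ U := by
  rw [locallyConnectedSpace_iff_connected_subsets]
  constructor
  · intro h x hx U hU
    obtain ⟨N, hN, hNc, hNU⟩ := h ⟨x, hx⟩ (Subtype.val ⁻¹' U)
      (continuous_subtype_val.continuousAt hU)
    exact ⟨Subtype.val '' N, mem_nhds_subtype_iff_nhdsWithin.1 hN,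
      IsInducing.subtypeVal.isPreconnected_image.2 hNc,
      subset_inter (Subtype.coe_image_subset X N) (image_subset_iff.2 hNU)⟩
  · rintro h ⟨x, hx⟩ O hO
    obtain ⟨U, hU, hUO⟩ := (mem_nhds_subtype X ⟨x, hx⟩ O).1 hO
    obtain ⟨N, hN, hNc, hNU⟩ := h x hx U hU
    refine ⟨Subtype.val ⁻¹' N, preimage_coe_mem_nhds_subtype.2 hN, ?_,
      (preimage_mono (hNU.trans inter_subset_right)).trans hUO⟩
    rwa [← IsInducing.subtypeVal.isPreconnected_image, Subtype.image_preimage_coe,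
      inter_eq_self_of_subset_right (hNU.trans inter_subset_left)]

lemma connectedComponentIn_mem_nhdsWithin {α : Type*} [TopologicalSpace α] {K V : Set α} {x : α}
    (hK : IsClosed K) (hV : V ∈ 𝓝[K] x) (hfin : (connectedComponentIn K '' V).Finite) :
    connectedComponentIn K x ∈ 𝓝[K] x := by
  have hclosed : IsClosed (⋃₀ (connectedComponentIn K '' V \ {connectedComponentIn K x})) := by
    rw [sUnion_eq_biUnion]
    refine (hfin.subset sdiff_subset).isClosed_biUnion ?_
    rintro _ ⟨⟨z, -, rfl⟩, -⟩
    exact isClosed_connectedComponentIn hK z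
  have hx : x ∉ ⋃₀ (connectedComponentIn K '' V \ {connectedComponentIn K x}) := by
    rintro ⟨_, ⟨⟨z, -, rfl⟩, hne⟩, hxz⟩
    exact hne (connectedComponentIn_eq hxz)
  filter_upwards [hV, self_mem_nhdsWithin, mem_nhdsWithin_of_mem_nhds
    (hclosed.isOpen_compl.mem_nhds hx)] with z hzV hzK hz
  by_contra hzx
  exact hz ⟨_, ⟨⟨z, hzV, rfl⟩, fun h ↦ hzx (h ▸ mem_connectedComponentIn hzK)⟩,
    mem_connectedComponentIn hzK⟩

lemma pairwise_disjoint_range_connectedComponentIn {α : Type*} [TopologicalSpace α] (K : Set α) :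
    (range (connectedComponentIn K)).Pairwise Disjoint := by
  rintro _ ⟨x, rfl⟩ _ ⟨y, rfl⟩ hne
  exact disjoint_left.2 fun z hzx hzy ↦
    hne ((connectedComponentIn_eq hzx).trans (connectedComponentIn_eq hzy).symm)

lemma sub_dist_le_diam_connectedComponentIn {α : Type*} [MetricSpace α] {X : Set α} {x z : α}
    {r : ℝ} (hX : IsContinuum X) (hXr : ¬ X ⊆ closedBall x r) (hz : z ∈ X ∩ closedBall x r) :
    r - dist z x ≤ diam (connectedComponentIn (X ∩ closedBall x r) z) := by
  obtain ⟨w, hw, hwr⟩ :=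
    connectedComponentIn_inter_closure_sdiff_nonempty hX isClosed_closedBall hz hXr
  have hrw : r ≤ dist w x := closure_minimal (fun y hy ↦ (not_le.1 hy.2).le)
    (isClosed_le continuous_const (continuous_id.dist continuous_const)) hwr
  calc r - dist z x ≤ dist w x - dist z x := by gcongr
    _ ≤ dist w z := sub_le_iff_le_add.2 (dist_triangle w z x)
    _ ≤ diam (connectedComponentIn (X ∩ closedBall x r) z) :=
      dist_le_diam_of_mem (isBounded_closedBall.subset
        ((connectedComponentIn_subset _ _).trans inter_subset_right)) hw
        (mem_connectedComponentIn hz)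

lemma connectedComponentIn_inter_closedBall_mem_nhdsWithin {α : Type*} [MetricSpace α] {X : Set α}
    {x : α} {r : ℝ} (hX : IsContinuum X) (hr : 0 < r) (hx : x ∈ X)
    (h : ∀ 𝒞 : Set (Set α), (∀ C ∈ 𝒞, C ⊆ X ∧ IsCompact C ∧ IsConnected C ∧ r / 2 ≤ diam C) →
      𝒞.Pairwise Disjoint → 𝒞.Finite) :
    connectedComponentIn (X ∩ closedBall x r) x ∈ 𝓝[X] x := by
  by_cases hXr : X ⊆ closedBall x r
  · rw [inter_eq_self_of_subset_left hXr, hX.isPreconnected.connectedComponentIn hx]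
    exact self_mem_nhdsWithin
  have hball : closedBall x (r / 2) ⊆ closedBall x r := closedBall_subset_closedBall (by linarith)
  have hfin :
      (connectedComponentIn (X ∩ closedBall x r) '' (X ∩ closedBall x (r / 2))).Finite := by
    refine h _ ?_
      ((pairwise_disjoint_range_connectedComponentIn _).mono (image_subset_range _ _))
    rintro _ ⟨z, hz, rfl⟩
    have hzr : z ∈ X ∩ closedBall x r := ⟨hz.1, hball hz.2⟩
    have hcomp : IsContinuum (connectedComponentIn (X ∩ closedBall x r) z) :=
      isContinuum_connectedComponentIn (hX.isCompact.inter_right isClosed_closedBall) hzr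
    refine ⟨(connectedComponentIn_subset _ _).trans inter_subset_left, hcomp.isCompact,
      hcomp.isConnected, ?_⟩
    linarith [sub_dist_le_diam_connectedComponentIn hX hXr hzr, mem_closedBall.1 hz.2]
  have hnhds : 𝓝[X ∩ closedBall x r] x = 𝓝[X] x := nhdsWithin_inter_of_mem' <|
    mem_nhdsWithin_of_mem_nhds (closedBall_mem_nhds x hr)
  rw [← hnhds]
  refine connectedComponentIn_mem_nhdsWithin
    (hX.isCompact.isClosed.inter isClosed_closedBall) ?_ hfin
  rw [hnhds]
  exact inter_mem_nhdsWithin X (closedBall_mem_nhds x (half_pos hr))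

lemma FinSuslinianSet.locallyConnectedSpace {X : Set ℂ} (h : FinSuslinianSet X)
    (hX : IsContinuum X) : LocallyConnectedSpace X := by
  refine locallyConnectedSpace_coe_iff.2 fun x hx U hU ↦ ?_
  obtain ⟨r, hr, hrU⟩ := nhds_basis_closedBall.mem_iff.1 hU
  exact ⟨_, connectedComponentIn_inter_closedBall_mem_nhdsWithin hX hr hx (h _ (half_pos hr)),
    isPreconnected_connectedComponentIn,
    (connectedComponentIn_subset _ x).trans (inter_subset_inter_right X hrU)⟩

end FinSuslinian

section LocallyConnected

lemma exists_isContinuum_mem_nhdsWithin {α : Type*} [TopologicalSpace α] [T3Space α] {X U : Set α}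
    {a : α} [LocallyConnectedSpace X] (hX : IsCompact X) (ha : a ∈ X) (hU : U ∈ 𝓝 a) :
    ∃ E ∈ 𝓝[X] a, IsContinuum E ∧ E ⊆ X ∩ U := by
  obtain ⟨V, hV, hVclosed, hVU⟩ := exists_mem_nhds_isClosed_subset hU
  obtain ⟨N, hN, hNc, hNV⟩ := locallyConnectedSpace_coe_iff.1 ‹_› a ha V hV
  have hsub : closure N ⊆ X ∩ V := closure_minimal hNV (hX.isClosed.inter hVclosed)
  exact ⟨closure N, mem_of_superset hN subset_closure,
    ⟨hX.of_isClosed_subset isClosed_closure (hsub.trans inter_subset_left),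
      ⟨a, subset_closure (mem_of_mem_nhdsWithin ha hN)⟩, hNc.closure⟩,
    hsub.trans (inter_subset_inter_right X hVU)⟩

lemma exists_half_le_dist_of_le_diam {α : Type*} [PseudoMetricSpace α] {C : Set α} {ε : ℝ}
    (hε : 0 < ε) (hC : ε ≤ Metric.diam C) : ∃ p ∈ C, ∃ q ∈ C, ε / 2 ≤ dist p q := by
  by_contra! h
  linarith [Metric.diam_le_of_forall_dist_le (half_pos hε).le fun p hp q hq ↦ (h p hp q hq).le]

lemma exists_half_le_dist_forall_infinite_inter_nonempty {α : Type*} [PseudoMetricSpace α]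
    {X : Set α} {𝒞 : Set (Set α)} {ε : ℝ} (hX : IsCompact X) (hε : 0 < ε) (h𝒞 : 𝒞.Infinite)
    (h : ∀ C ∈ 𝒞, C ⊆ X ∧ ε ≤ Metric.diam C) :
    ∃ a ∈ X, ∃ b ∈ X, ε / 2 ≤ dist a b ∧ ∀ V ∈ 𝓝[X] a, ∀ W ∈ 𝓝[X] b,
      {C ∈ 𝒞 | (C ∩ V).Nonempty ∧ (C ∩ W).Nonempty}.Infinite := by
  have := h𝒞.to_subtype
  choose p hp q hq hpq using fun C : 𝒞 ↦ exists_half_le_dist_of_le_diam hε (h C C.2).2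
  have hpX (C : 𝒞) : p C ∈ X := (h C C.2).1 (hp C)
  have hqX (C : 𝒞) : q C ∈ X := (h C C.2).1 (hq C)
  have hK : IsCompact ((X ×ˢ X) ∩ {z : α × α | ε / 2 ≤ dist z.1 z.2}) :=
    (hX.prod hX).inter_right (isClosed_le continuous_const continuous_dist)
  obtain ⟨⟨a, b⟩, ⟨⟨ha, hb⟩, hab⟩, hcluster⟩ := hK.exists_mapClusterPt (f := cofinite)
    (u := fun C ↦ (p C, q C))
    (tendsto_principal.2 (.of_forall fun C ↦ ⟨⟨hpX C, hqX C⟩, hpq C⟩))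
  refine ⟨a, ha, b, hb, hab, fun V hV W hW ↦ ?_⟩
  obtain ⟨V', hV', hVV'⟩ := mem_nhdsWithin_iff_exists_mem_nhds_inter.1 hV
  obtain ⟨W', hW', hWW'⟩ := mem_nhdsWithin_iff_exists_mem_nhds_inter.1 hW
  have hinf := frequently_cofinite_iff_infinite.1 (hcluster.frequently (prod_mem_nhds hV' hW'))
  refine (hinf.image Subtype.val_injective.injOn).mono ?_
  rintro _ ⟨C, ⟨hCV, hCW⟩, rfl⟩
  exact ⟨C.2, ⟨p C, hp C, hVV' ⟨hCV, hpX C⟩⟩, ⟨q C, hq C, hWW' ⟨hCW, hqX C⟩⟩⟩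

lemma Unshielded.finSuslinianSet {X : Set ℂ} [LocallyConnectedSpace X] (hXu : Unshielded X)
    (hX : IsCompact X) : FinSuslinianSet X := by
  intro ε hε 𝒞 h𝒞 hdisj
  by_contra hinf
  obtain ⟨a, ha, b, hb, hab, hmeet⟩ := exists_half_le_dist_forall_infinite_inter_nonempty hX hε hinf
    fun C hC ↦ ⟨(h𝒞 C hC).1, (h𝒞 C hC).2.2.2⟩
  obtain ⟨U₁, U₂, hU₁, hU₂, hUU⟩ := t2_separation_nhds (dist_pos.1 ((half_pos hε).trans_le hab))
  obtain ⟨E₁, hE₁a, hE₁, hE₁X⟩ := exists_isContinuum_mem_nhdsWithin hX ha hU₁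
  obtain ⟨E₂, hE₂b, hE₂, hE₂X⟩ := exists_isContinuum_mem_nhdsWithin hX hb hU₂
  let C (i : Fin 3) := (hmeet E₁ hE₁a E₂ hE₂b).natEmbedding _ i
  have hC (i : Fin 3) : (C i : Set ℂ) ∈ 𝒞 := (C i).2.1
  have hCinj : Function.Injective fun i ↦ (C i : Set ℂ) :=
    Subtype.val_injective.comp ((Function.Embedding.injective _).comp Fin.val_injective)
  have hUX : Disjoint (UInf X) X := disjoint_left.2 fun _ hz ↦ hz.1
  obtain ⟨i, hi⟩ := exists_not_subset_closure (C := fun i ↦ C i) (isPathConnected_UInf hX) hE₁ hE₂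
    (fun i ↦ ⟨(h𝒞 _ (hC i)).2.1, (h𝒞 _ (hC i)).2.2.1⟩)
    (hUX.mono_right (hE₁X.trans inter_subset_left)) (hUX.mono_right (hE₂X.trans inter_subset_left))
    (fun i ↦ hUX.mono_right (h𝒞 _ (hC i)).1)
    (hUU.mono (hE₁X.trans inter_subset_right) (hE₂X.trans inter_subset_right))
    (fun i j hij ↦ hdisj (hC i) (hC j) (hCinj.ne hij)) (fun i ↦ (C i).2.2.1) fun i ↦ (C i).2.2.2
  exact hi ((h𝒞 _ (hC i)).1.trans (hXu.subset.trans frontier_subset_closure))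

end LocallyConnected

/-- An unshielded plane continuum is locally connected if and only if it is finitely
Suslinian. -/
theorem unshielded_lc_iff_finSuslinian (X : Set ℂ)
    (hXcpt : IsCompact X) (hXconn : IsConnected X) (hXun : Unshielded X) :
    LocallyConnectedSpace ↥X ↔ FinSuslinianSet X :=
  ⟨fun _ ↦ hXun.finSuslinianSet hXcpt, fun h ↦ h.locallyConnectedSpace ⟨hXcpt, hXconn⟩⟩
end

section
/- Let X and Y be compacta and let m : X → Y be a monotone map. Then distinct connected components of X map into distinct connected components of Y: if A and B are connected components of X with A ≠ B, then the connected component of Y containing m(A) is different from the connected component of Y containing m(B). -/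
/-- A monotone map: a continuous surjection all of whose fibers are connected. -/
def IsMonotoneMap {A B : Type} [TopologicalSpace A] [TopologicalSpace B] (f : A → B) : Prop :=
  Continuous f ∧ Function.Surjective f ∧ ∀ b : B, IsConnected (f ⁻¹' {b})

theorem IsMonotoneMap.isQuotientMap {A B : Type} [TopologicalSpace A] [TopologicalSpace B]
    [CompactSpace A] [T2Space B] {f : A → B} (hf : IsMonotoneMap f) :
    Topology.IsQuotientMap f :=
  hf.1.isClosedMap.isQuotientMap hf.1 hf.2.1

theorem monotone_separates_components_general {X Y : Type*} [TopologicalSpace X]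
    [TopologicalSpace Y] {f : X → Y} (hf : Topology.IsCoinducing f)
    (h_fibers : ∀ y, IsConnected (f ⁻¹' {y})) {a b : X}
    (hab : connectedComponent a ≠ connectedComponent b) :
    connectedComponent (f a) ≠ connectedComponent (f b) := fun h_image ↦
  hab <| calc
    connectedComponent a = f ⁻¹' connectedComponent (f a) :=
      (hf.preimage_connectedComponent h_fibers a).symm
    _ = f ⁻¹' connectedComponent (f b) := by rw [h_image]
    _ = connectedComponent b := hf.preimage_connectedComponent h_fibers b

/-- A monotone map between compacta sends distinct connected components of the source into
distinct connected components of the target. -/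
theorem monotone_separates_components (X Y : Type) [MetricSpace X] [MetricSpace Y]
    [CompactSpace X] [CompactSpace Y] [Nonempty X] [Nonempty Y]
    (m : X → Y) (hm : IsMonotoneMap m) (x y : X)
    (h : connectedComponent x ≠ connectedComponent y) :
    connectedComponent (m x) ≠ connectedComponent (m y) :=
  monotone_separates_components_general hm.isQuotientMap.isCoinducing hm.2.2 h
end
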